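/- Let A' be the automaton of the composition construction (see context). Then every reset word of A' of length exactly z(t)+1 is of the form α_i y₁⋯y_{d_i} κ^{z(t)−1−d_i} ω_s for some i∈{1,…,m}, some letters y₁,…,y_{d_i}∈I_i, and some s∈{1,…,t}, and moreover in this case y₁⋯y_{d_i} is a reset word of A_i. -/

import Mathlib

/-!
A guard-table state at level `0` can only leave level `0` by an `α`-letter, which puts it at
level `1`; every letter then raises the level by at most one, and `D` is only reached by an
`ω`-letter from level `z`. Hence a guard state needs at least `z + 1` letters to reach `D` from
level `0` and `z - h + 1` letters from level `h ≥ 1` (`guardDist_le_length`).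

The state `D` is fixed by all letters, so a reset word sends everything to `D`. If its length is
`z + 1`, there is no slack: it starts with some `α_i`, and then each letter must raise the level of
every `(h, k, T)` with `k ∈ 𝔟(i)` and every `(h, k, F)` with `k ∉ 𝔟(i)`, until `ω_s` is read at
level `z`. A letter of `I_j` other than `κ` does that only if `h ≤ d_j` and `𝔟(j) = 𝔟(i)`, that is
`j = i`, since the numbers `1, …, m` are determined by their bits at positions `0, …, q`. This gives
the form of the word (`tight_suffix_form`). Finally, `α_i` and `κ` fix the original states, and
`ω_s` sends only `s` to `D`, so `y₁⋯y_{d_i}` sends every original state to `s`.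
-/

/-- `z(t) = (t³ − t)/6`. -/
def zval (t : ℕ) : ℕ := (t ^ 3 - t) / 6

/-- The transition function of the automaton `A_i` on states `Fin t`, where the
letters of `A_i` are `Option (L i)`: `none` is the shared letter `κ`, acting as the
identity, and `some a` acts via `δA i`. -/
def stepA {m t : ℕ} {L : Fin m → Type} (δA : ∀ i, Fin t → L i → Fin t)
    (i : Fin m) (s : Fin t) : Option (L i) → Fin t
  | none => s
  | some a => δA i s a

/-- The alphabet `I'` of the composed automaton `A'`: the shared letter `κ`,
the non-`κ` letters of each `A_i` (pairwise disjoint), the letters `α_1,…,α_m`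
and the letters `ω_1,…,ω_t`. -/
inductive CLetter (m t : ℕ) (L : Fin m → Type) : Type where
  | kappa : CLetter m t L
  | letter (i : Fin m) (a : L i) : CLetter m t L
  | alpha (i : Fin m) : CLetter m t L
  | omega (s : Fin t) : CLetter m t L

/-- Embedding of the alphabet `I_i` of `A_i` into `I'`. -/
def embedL {m t : ℕ} {L : Fin m → Type} (i : Fin m) : Option (L i) → CLetter m t L
  | none => CLetter.kappa
  | some a => CLetter.letter i a

/-- The state set `Q'` of `A'`: the original states `{1,…,t}`, the absorbing state `D`,
and the guard table `{0,…,z} × {0,…,q} × {T,F}` (with `T = true`, `F = false`). -/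
inductive CState (t z q : ℕ) : Type where
  | orig (s : Fin t)
  | dead
  | guard (h : Fin (z + 1)) (k : Fin (q + 1)) (b : Bool)

/-- The transition function `δ'` of the composed automaton `A'`.
Here `𝔟(i) ⊆ {0,…,q}` is the set of 1-bit positions of the number `i+1 ∈ {1,…,m}`
(membership of `k` is `Nat.testBit (i+1) k = true`). -/
def compStep {m t : ℕ} {L : Fin m → Type} (z q : ℕ)
    (δA : ∀ i, Fin t → L i → Fin t) (d : Fin m → ℕ) (hd : ∀ i, d i + 1 ≤ z)
    (πT πF : Fin m → Fin (q + 1) → Fin (q + 1)) :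
    CState t z q → CLetter m t L → CState t z q
  | CState.orig s, CLetter.kappa => CState.orig s
  | CState.orig s, CLetter.letter i a => CState.orig (δA i s a)
  | CState.orig s, CLetter.alpha _ => CState.orig s
  | CState.orig s, CLetter.omega r => if s = r then CState.dead else CState.orig s
  | CState.dead, _ => CState.dead
  | CState.guard _ k b, CLetter.alpha i =>
      CState.guard 1 (if b then πT i k else πF i k) b
  | CState.guard h k b, CLetter.letter i _ =>
      if hc : 1 ≤ h.val ∧ h.val ≤ d i ∧ Nat.testBit (i.val + 1) k.val = b then
        CState.guard ⟨h.val + 1, by have := hd i; omega⟩ k b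
      else CState.guard 0 k b
  | CState.guard h k b, CLetter.kappa =>
      if hc : 1 ≤ h.val ∧ h.val < z then
        CState.guard ⟨h.val + 1, by omega⟩ k b
      else CState.guard 0 k b
  | CState.guard h k b, CLetter.omega _ =>
      if h.val = z then CState.dead else CState.guard 0 k b

/-- `w` is a reset word for the automaton with transition function `step`:
the image of the whole state set under `w` is a singleton. -/
def IsResetWord {Q A : Type*} (step : Q → A → Q) (w : List A) : Prop :=
  ∃ q0 : Q, ∀ q : Q, w.foldl step q = q0

/-- A lower bound for the number of letters that take a guard-table state of level `h` to `D`. -/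
def guardDist (z h : ℕ) : ℕ := if h = 0 then z + 1 else z - h + 1

section Composition

variable {m t : ℕ} {L : Fin m → Type} {z q : ℕ}
  (δA : ∀ i, Fin t → L i → Fin t) (d : Fin m → ℕ) (hd : ∀ i, d i + 1 ≤ z)
  (πT πF : Fin m → Fin (q + 1) → Fin (q + 1))

theorem foldl_compStep_dead (w : List (CLetter m t L)) :
    w.foldl (compStep z q δA d hd πT πF) CState.dead = CState.dead := by
  induction w with
  | nil => rfl
  | cons x w ih => simpa [compStep] using ih

theorem val_one_of_pos (hz : 1 ≤ z) : (1 : Fin (z + 1)).val = 1 := by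
  rw [Fin.val_one']
  exact Nat.mod_eq_of_lt (by omega)

theorem guardDist_le_length (hz : 1 ≤ z) (v : List (CLetter m t L)) :
    ∀ (h : Fin (z + 1)) (k : Fin (q + 1)) (b : Bool),
      v.foldl (compStep z q δA d hd πT πF) (CState.guard h k b) = CState.dead →
      guardDist z h.val ≤ v.length := by
  have h1 := val_one_of_pos hz
  induction v with
  | nil => intro h k b hv; simp at hv
  | cons x v ih =>
    intro h k b hv
    have hh := h.isLt
    rw [List.foldl_cons] at hv
    rw [List.length_cons]
    cases x with
    | kappa =>
      simp only [compStep] at hv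
      split_ifs at hv <;>
      · have := ih _ _ _ hv
        simp only [guardDist, Fin.val_zero] at this ⊢
        split_ifs at this ⊢ <;> omega
    | letter i a =>
      simp only [compStep] at hv
      split_ifs at hv <;>
      · have := ih _ _ _ hv
        simp only [guardDist, Fin.val_zero] at this ⊢
        split_ifs at this ⊢ <;> omega
    | alpha i =>
      simp only [compStep] at hv
      have := ih _ _ _ hv
      simp only [guardDist, h1] at this ⊢
      split_ifs at this ⊢ <;> omega
    | omega s =>
      simp only [compStep] at hv
      split_ifs at hv with hc
      · simp only [guardDist]
        split_ifs <;> omega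
      · have := ih _ _ _ hv
        simp only [guardDist, Fin.val_zero] at this ⊢
        split_ifs at this ⊢ <;> omega

/-- The indices `1, …, m` are determined by their bits at the positions `0, …, q`. -/
theorem index_eq_of_testBit (hq : m < 2 ^ (q + 1)) (i j : Fin m)
    (h : ∀ k : Fin (q + 1), Nat.testBit (j.val + 1) k.val = Nat.testBit (i.val + 1) k.val) :
    j = i := by
  have : j.val + 1 = i.val + 1 := by
    apply Nat.eq_of_testBit_eq
    intro k
    by_cases hk : k < q + 1
    · exact h ⟨k, hk⟩
    · have hpow : 2 ^ (q + 1) ≤ 2 ^ k := Nat.pow_le_pow_right (by norm_num) (by omega)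
      have hi := i.isLt
      have hj := j.isLt
      rw [Nat.testBit_lt_two_pow (by omega), Nat.testBit_lt_two_pow (by omega)]
  exact Fin.ext (by omega)

/-- If a word of the minimal length `z - h + 1` kills all guard-table states of level `h ≥ 1` that
are compatible with `𝔟(i)`, then it consists of letters of `I_i` while the level is at most `d_i`,
then of letters `κ`, and ends with an `ω`-letter. -/
theorem tight_suffix_form (hz : 1 ≤ z) (hq : m < 2 ^ (q + 1)) (i : Fin m)
    (v : List (CLetter m t L)) :
    ∀ h : Fin (z + 1), 1 ≤ h.val → v.length = z - h.val + 1 →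
      (∀ k : Fin (q + 1), v.foldl (compStep z q δA d hd πT πF)
        (CState.guard h k (Nat.testBit (i.val + 1) k.val)) = CState.dead) →
      ∃ (ys : List (Option (L i))) (s : Fin t), ys.length = d i + 1 - h.val ∧
        v = ys.map (embedL i) ++
          (List.replicate (z - max h.val (d i + 1)) CLetter.kappa ++ [CLetter.omega s]) := by
  have h1 := val_one_of_pos hz
  have hdi := hd i
  induction v with
  | nil => intro h _ hl; simp at hl
  | cons x v ih =>
    intro h hpos hl hv
    have hh := h.isLt
    rw [List.length_cons] at hl
    simp only [List.foldl_cons] at hv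
    -- Falling back to level `0` leaves too few letters.
    have fall : ∀ k b, v.foldl (compStep z q δA d hd πT πF) (CState.guard 0 k b) ≠ CState.dead := by
      intro k b hk
      have := guardDist_le_length δA d hd πT πF hz v _ _ _ hk
      simp only [guardDist, Fin.val_zero] at this
      simp at this
      omega
    cases x with
    | kappa =>
      simp only [compStep] at hv
      by_cases hc : 1 ≤ h.val ∧ h.val < z
      · simp only [dif_pos hc] at hv
        obtain ⟨ys, s, hys, rfl⟩ := ih _ (by simp) (by simp only; omega) hv
        simp only at hys
        by_cases hle : h.val ≤ d i
        · refine ⟨none :: ys, s, by simp only [List.length_cons]; omega, ?_⟩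
          have e : max (h.val + 1) (d i + 1) = max h.val (d i + 1) := by omega
          simp [embedL, e]
        · have hnil : ys = [] := List.length_eq_zero_iff.mp (by omega)
          subst hnil
          refine ⟨[], s, by simp only [List.length_nil]; omega, ?_⟩
          have e : z - max h.val (d i + 1) = (z - max (h.val + 1) (d i + 1)) + 1 := by omega
          rw [e, List.replicate_succ]
          simp
      · simp only [dif_neg hc] at hv
        exact absurd (hv 0) (fall _ _)
    | letter j a =>
      simp only [compStep] at hv
      have hc : ∀ k : Fin (q + 1), 1 ≤ h.val ∧ h.val ≤ d j ∧
          Nat.testBit (j.val + 1) k.val = Nat.testBit (i.val + 1) k.val := by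
        intro k
        by_contra hc
        have := hv k
        rw [dif_neg hc] at this
        exact fall _ _ this
      obtain rfl := index_eq_of_testBit hq i j (fun k => (hc k).2.2)
      have hle := (hc 0).2.1
      have hlt : h.val + 1 < z + 1 := by omega
      simp only [and_true, dif_pos (And.intro hpos hle)] at hv
      obtain ⟨ys, s, hys, rfl⟩ := ih ⟨h.val + 1, hlt⟩ (by simp) (by simp only; omega) hv
      simp only at hys
      refine ⟨some a :: ys, s, by simp only [List.length_cons]; omega, ?_⟩
      have e : max (h.val + 1) (d j + 1) = max h.val (d j + 1) := by omega
      simp [embedL, e]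
    | alpha j =>
      simp only [compStep] at hv
      have := guardDist_le_length δA d hd πT πF hz v _ _ _ (hv 0)
      simp only [guardDist, h1] at this
      simp at this
      omega
    | omega s =>
      simp only [compStep] at hv
      by_cases hc : h.val = z
      · have hnil : v = [] := List.length_eq_zero_iff.mp (by omega)
        subst hnil
        refine ⟨[], s, by simp only [List.length_nil]; omega, ?_⟩
        have e : z - max h.val (d i + 1) = 0 := by omega
        simp [e]
      · simp only [if_neg hc] at hv
        exact absurd (hv 0) (fall _ _)

theorem foldl_compStep_orig_embedL (i : Fin m) (ys : List (Option (L i))) (s : Fin t) :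
    (ys.map (embedL i)).foldl (compStep z q δA d hd πT πF) (CState.orig s) =
      CState.orig (ys.foldl (stepA δA i) s) := by
  induction ys generalizing s with
  | nil => rfl
  | cons y ys ih => cases y <;> simp [embedL, compStep, stepA, ih]

theorem foldl_compStep_orig_replicate (n : ℕ) (s : Fin t) :
    (List.replicate n CLetter.kappa).foldl (compStep z q δA d hd πT πF) (CState.orig s) =
      CState.orig s := by
  induction n with
  | zero => rfl
  | succ n ih => simpa [List.replicate_succ, compStep] using ih

end Composition

/-- **property C2.** Every reset word of the composed automaton `A'`
of length exactly `z(t) + 1` has the form `α_i y₁⋯y_{d_i} κ^{z(t)−1−d_i} ω_s` for some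
`i ∈ {1,…,m}`, letters `y₁,…,y_{d_i} ∈ I_i` and `s ∈ {1,…,t}`, and moreover
`y₁⋯y_{d_i}` is a reset word of `A_i`. -/
theorem reset_word_of_composition_of_length_z_add_one_has_special_form
    {t m : ℕ} (ht : 1 ≤ t) (hm : 1 ≤ m)
    {L : Fin m → Type} [∀ i, Fintype (L i)]
    (δA : ∀ i, Fin t → L i → Fin t)
    (d : Fin m → ℕ) (hd : ∀ i, d i + 1 ≤ zval t)
    (πT πF : Fin m → Fin (Nat.log 2 (m + 1) + 1) → Fin (Nat.log 2 (m + 1) + 1))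
    (hπT : ∀ i k, (∃ j, πT i j = k) ↔ Nat.testBit (i.val + 1) k.val = true)
    (hπF : ∀ i k, (∃ j, πF i j = k) ↔ Nat.testBit (i.val + 1) k.val = false)
    (w : List (CLetter m t L))
    (hw : IsResetWord (compStep (zval t) (Nat.log 2 (m + 1)) δA d hd πT πF) w)
    (hlen : w.length = zval t + 1) :
    ∃ (i : Fin m) (ys : List (Option (L i))) (s : Fin t),
      ys.length = d i ∧
      w = CLetter.alpha i ::
            (ys.map (embedL i) ++
              (List.replicate (zval t - 1 - d i) CLetter.kappa ++ [CLetter.omega s])) ∧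
      IsResetWord (stepA δA i) ys := by
  have hz : 1 ≤ zval t := by
    have := hd ⟨0, hm⟩
    omega
  have hq : m < 2 ^ (Nat.log 2 (m + 1) + 1) := by
    have := Nat.lt_pow_succ_log_self (b := 2) (by norm_num) (m + 1)
    exact lt_trans (Nat.lt_succ_self m) this
  obtain ⟨q0, hq0⟩ := hw
  have hdead : q0 = CState.dead := by
    rw [← hq0 CState.dead, foldl_compStep_dead]
  subst hdead
  have h1 := val_one_of_pos hz
  cases w with
  | nil => simp at hlen
  | cons x v =>
    rw [List.length_cons] at hlen
    simp only [List.foldl_cons] at hq0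
    -- The first letter has to lift level `0`, so it is an `α`-letter.
    have fall : v.foldl (compStep (zval t) (Nat.log 2 (m + 1)) δA d hd πT πF)
        (CState.guard 0 0 true) ≠ CState.dead := by
      intro hk
      have := guardDist_le_length δA d hd πT πF hz v _ _ _ hk
      simp only [guardDist, Fin.val_zero] at this
      simp at this
      omega
    have hg := hq0 (CState.guard 0 0 true)
    cases x with
    | kappa => exact absurd (by simpa [compStep] using hg) fall
    | letter j a => exact absurd (by simpa [compStep] using hg) fall
    | omega s =>
      have h0 : ¬ (0 = zval t) := by omega
      exact absurd (by simpa [compStep, h0] using hg) fall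
    | alpha i =>
      have hv : ∀ k, v.foldl (compStep (zval t) (Nat.log 2 (m + 1)) δA d hd πT πF)
          (CState.guard 1 k (Nat.testBit (i.val + 1) k.val)) = CState.dead := by
        intro k
        cases hb : Nat.testBit (i.val + 1) k.val with
        | true =>
          obtain ⟨j, rfl⟩ := (hπT i k).2 hb
          simpa [compStep] using hq0 (CState.guard 0 j true)
        | false =>
          obtain ⟨j, rfl⟩ := (hπF i k).2 hb
          simpa [compStep] using hq0 (CState.guard 0 j false)
      obtain ⟨ys, s, hys, rfl⟩ := tight_suffix_form δA d hd πT πF hz hq i v 1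
        (by omega) (by omega) hv
      rw [h1] at hys
      have e : zval t - max (1 : Fin (zval t + 1)).val (d i + 1) = zval t - 1 - d i := by
        omega
      refine ⟨i, ys, s, by omega, by rw [e], s, fun p => ?_⟩
      have hp := hq0 (CState.orig p)
      by_contra hne
      simp only [compStep, List.foldl_append, foldl_compStep_orig_embedL,
        foldl_compStep_orig_replicate, List.foldl_cons, List.foldl_nil, if_neg hne] at hp
      cases hp
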